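/- If the position vector of M satisfies Δ^{II} x = λ x on U for some real λ ≠ 0, then the support function satisfies ⟨x, n⟩ = −2/λ at every point of U. -/

import Mathlib

open Matrix

noncomputable section

/-- The parameter domain `ℝ²`. -/
abbrev Param : Type := Fin 2 → ℝ

/-- Vectors in Euclidean 3-space. -/
abbrev Vec3 : Type := Fin 3 → ℝ

/-- Partial derivative of a vector-valued function in the `i`-th coordinate direction. -/
noncomputable def pd (i : Fin 2) (f : Param → Vec3) (u : Param) : Vec3 :=
  fderiv ℝ f u (Pi.single i 1)

/-- Partial derivative of a scalar function in the `i`-th coordinate direction. -/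
noncomputable def pds (i : Fin 2) (f : Param → ℝ) (u : Param) : ℝ :=
  fderiv ℝ f u (Pi.single i 1)

/-- The Euclidean inner product on `ℝ³`. -/
def dot3 (a b : Vec3) : ℝ := ∑ k, a k * b k

/-- The Euclidean norm on `ℝ³`. -/
noncomputable def norm3 (a : Vec3) : ℝ := Real.sqrt (dot3 a a)

/-- The Gauss map `n = (x_{/1} × x_{/2}) / ‖x_{/1} × x_{/2}‖`. -/
noncomputable def gaussMap (x : Param → Vec3) (u : Param) : Vec3 :=
  (norm3 (crossProduct (pd 0 x u) (pd 1 x u)))⁻¹ • crossProduct (pd 0 x u) (pd 1 x u)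

/-- Components `g_{ij}` of the first fundamental form. -/
noncomputable def fformI (x : Param → Vec3) (u : Param) : Matrix (Fin 2) (Fin 2) ℝ :=
  Matrix.of fun i j => dot3 (pd i x u) (pd j x u)

/-- Components `b_{ij} = ⟨∂²x/∂u^i∂u^j, n⟩` of the second fundamental form. -/
noncomputable def fformII (x : Param → Vec3) (u : Param) : Matrix (Fin 2) (Fin 2) ℝ :=
  Matrix.of fun i j => dot3 (pd i (pd j x) u) (gaussMap x u)

/-- Components `e_{ij} = ⟨n_{/i}, n_{/j}⟩` of the third fundamental form. -/
noncomputable def fformIII (x : Param → Vec3) (u : Param) : Matrix (Fin 2) (Fin 2) ℝ :=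
  Matrix.of fun i j => dot3 (pd i (gaussMap x) u) (pd j (gaussMap x) u)

/-- The Gauss curvature `K = det(b_{ij}) / det(g_{ij})`. -/
noncomputable def gaussCurv (x : Param → Vec3) (u : Param) : ℝ :=
  (fformII x u).det / (fformI x u).det

/-- The mean curvature `H = (1/2) g^{ij} b_{ij}`. -/
noncomputable def meanCurv (x : Param → Vec3) (u : Param) : ℝ :=
  (1 / 2) * ∑ i, ∑ j, (fformI x u)⁻¹ i j * fformII x u i j

/-- First Beltrami operator `∇^J(φ, ψ) = a^{ij} φ_{/i} ψ_{/j}` with respect to the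
fundamental form with component matrix `a`, for scalar `φ` and `ℝ³`-valued `ψ`. -/
noncomputable def beltrami1 (a : Param → Matrix (Fin 2) (Fin 2) ℝ)
    (φ : Param → ℝ) (ψ : Param → Vec3) (u : Param) : Vec3 :=
  ∑ i, ∑ j, ((a u)⁻¹ i j * pds i φ u) • pd j ψ u

/-- Second Beltrami operator
`Δ^J f = −(1/√|det a|) ∂_i (√|det a| a^{ij} ∂_j f)` with respect to the fundamental
form with component matrix `a`, acting componentwise on `ℝ³`-valued functions. -/
noncomputable def beltrami2 (a : Param → Matrix (Fin 2) (Fin 2) ℝ)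
    (f : Param → Vec3) (u : Param) : Vec3 :=
  -((Real.sqrt |(a u).det|)⁻¹ •
    ∑ i, ∑ j, pd i (fun v => (Real.sqrt |(a v).det| * (a v)⁻¹ i j) • pd j f v) u)

/-- `x` is an immersion on `U`: the partial derivatives are linearly independent. -/
def Immersed (x : Param → Vec3) (U : Set Param) : Prop :=
  ∀ u ∈ U, LinearIndependent ℝ ![pd 0 x u, pd 1 x u]

/-- `f` is nonconstant on `U`. -/
def NonconstOn (f : Param → Vec3) (U : Set Param) : Prop :=
  ¬ ∃ v : Vec3, ∀ u ∈ U, f u = v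

lemma pd_smooth {U : Set Param} (hU : IsOpen U) {f : Param → Vec3}
    (hf : ContDiffOn ℝ (⊤ : ℕ∞) f U) (i : Fin 2) : ContDiffOn ℝ (⊤ : ℕ∞) (pd i f) U := by
  have h := hf.fderiv_of_isOpen (m := (⊤ : ℕ∞)) hU (by simp)
  exact h.clm_apply contDiffOn_const

lemma dot3_diff {f g : Param → Vec3} {u : Param} (hf : DifferentiableAt ℝ f u)
    (hg : DifferentiableAt ℝ g u) : DifferentiableAt ℝ (fun v => dot3 (f v) (g v)) u := by
  unfold dot3
  have h1 := differentiableAt_pi.1 hf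
  have h2 := differentiableAt_pi.1 hg
  exact DifferentiableAt.fun_sum fun k _ => (h1 k).mul (h2 k)

lemma cross_diff {f g : Param → Vec3} {u : Param} (hf : DifferentiableAt ℝ f u)
    (hg : DifferentiableAt ℝ g u) :
    DifferentiableAt ℝ (fun v => crossProduct (f v) (g v)) u := by
  have h1 := differentiableAt_pi.1 hf
  have h2 := differentiableAt_pi.1 hg
  rw [differentiableAt_pi]
  intro k
  fin_cases k <;> simp [cross_apply] <;>
    exact ((h1 _).mul (h2 _)).sub ((h1 _).mul (h2 _))

lemma dot3_eq (a b : Vec3) : dot3 a b = a ⬝ᵥ b := rfl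

lemma dot3_pos {a : Vec3} (h : a ≠ 0) : 0 < dot3 a a := by
  have h0 : dot3 a a ≠ 0 := by
    rw [dot3_eq]; exact fun h' => h (dotProduct_self_eq_zero.1 h')
  have h1 : 0 ≤ dot3 a a := Finset.sum_nonneg fun k _ => mul_self_nonneg _
  exact lt_of_le_of_ne h1 h0.symm

lemma gauss_diff {x : Param → Vec3} {u : Param} (h0 : DifferentiableAt ℝ (pd 0 x) u)
    (h1 : DifferentiableAt ℝ (pd 1 x) u) (h : LinearIndependent ℝ ![pd 0 x u, pd 1 x u]) :
    DifferentiableAt ℝ (gaussMap x) u := by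
  have hc := cross_diff h0 h1
  have hne : crossProduct (pd 0 x u) (pd 1 x u) ≠ 0 := crossProduct_ne_zero_iff_linearIndependent.2 h
  have hp := dot3_pos hne
  have hn : DifferentiableAt ℝ (fun v => norm3 (crossProduct (pd 0 x v) (pd 1 x v))) u :=
    (dot3_diff hc hc).sqrt hp.ne'
  exact (hn.inv (Real.sqrt_pos.2 hp).ne').smul hc

lemma gauss_orth (x : Param → Vec3) (u : Param) (j : Fin 2) :
    dot3 (pd j x u) (gaussMap x u) = 0 := by
  unfold gaussMap
  rw [dot3_eq, dotProduct_smul]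
  fin_cases j <;> simp

lemma pd_smul {c : Param → ℝ} {f : Param → Vec3} {u : Param} (i : Fin 2)
    (hc : DifferentiableAt ℝ c u) (hf : DifferentiableAt ℝ f u) :
    pd i (fun v => c v • f v) u = c u • pd i f u + pds i c u • f u := by
  unfold pd pds
  rw [fderiv_fun_smul hc hf]
  simp

/-- if `Δ^{II} x = λ x` on `U` with `λ ≠ 0`, then `⟨x, n⟩ = −2/λ` on `U`. -/
theorem stmt10 (U : Set Param) (x : Param → Vec3)
    (hU : IsOpen U) (hUconn : IsConnected U)
    (hx : ContDiffOn ℝ (⊤ : ℕ∞) x U) (himm : Immersed x U)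
    (hell : ∀ u ∈ U, (fformII x u).PosDef)
    (lam : ℝ) (hlam : lam ≠ 0)
    (heig : ∀ u ∈ U, beltrami2 (fformII x) x u = lam • x u) :
    ∀ u ∈ U, dot3 (x u) (gaussMap x u) = -2 / lam := by
  intro u hu
  have hUn := hU.mem_nhds hu
  have hp1 : ∀ j, DifferentiableAt ℝ (pd j x) u := fun j =>
    ((pd_smooth hU hx j).contDiffAt hUn).differentiableAt (by simp)
  have hp2 : ∀ i j, DifferentiableAt ℝ (pd i (pd j x)) u := fun i j =>
    ((pd_smooth hU (pd_smooth hU hx j) i).contDiffAt hUn).differentiableAt (by simp)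
  have hg := gauss_diff (hp1 0) (hp1 1) (himm u hu)
  have hb : ∀ i j, DifferentiableAt ℝ (fun v => fformII x v i j) u := fun i j =>
    dot3_diff (hp2 i j) hg
  have hdet : DifferentiableAt ℝ (fun v => (fformII x v).det) u := by
    simp only [Matrix.det_fin_two]
    exact ((hb _ _).mul (hb _ _)).sub ((hb _ _).mul (hb _ _))
  have hpos := (hell u hu).det_pos
  have hsq : DifferentiableAt ℝ (fun v => Real.sqrt |(fformII x v).det|) u :=
    (hdet.abs hpos.ne').sqrt (abs_pos.2 hpos.ne').ne'
  have hinv : ∀ i j, DifferentiableAt ℝ (fun v => (fformII x v)⁻¹ i j) u := by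
    intro i j
    simp only [Matrix.inv_def, Ring.inverse_eq_inv', Matrix.smul_apply, smul_eq_mul,
      Matrix.adjugate_fin_two]
    refine (hdet.inv hpos.ne').mul ?_
    fin_cases i <;> fin_cases j <;> simp <;> exact hb _ _
  have hterm : ∀ i j, dot3 (pd i (fun v => (Real.sqrt |(fformII x v).det| *
      (fformII x v)⁻¹ i j) • pd j x v) u) (gaussMap x u) =
      Real.sqrt |(fformII x u).det| * ((fformII x u)⁻¹ i j * fformII x u i j) := by
    intro i j
    rw [pd_smul i (hsq.fun_mul (hinv i j)) (hp1 j)]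
    have h := gauss_orth x u j
    have h' : fformII x u i j = dot3 (pd i (pd j x) u) (gaussMap x u) := rfl
    rw [h']
    rw [dot3_eq] at *
    rw [add_dotProduct, smul_dotProduct, smul_dotProduct, h, dot3_eq]
    simp only [smul_eq_mul]
    ring
  have hsum : ∑ i, ∑ j, (fformII x u)⁻¹ i j * fformII x u i j = 2 := by
    have hs : ∀ i j, fformII x u i j = fformII x u j i := fun i j => by
      have := (hell u hu).isHermitian.apply i j
      simpa using this.symm
    have h1 : (fformII x u)⁻¹ * fformII x u = 1 :=
      Matrix.nonsing_inv_mul _ (isUnit_iff_ne_zero.2 hpos.ne')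
    have h2 : ∑ i, ∑ j, (fformII x u)⁻¹ i j * fformII x u i j
        = ((fformII x u)⁻¹ * fformII x u).trace := by
      simp only [Matrix.trace, Matrix.diag, Matrix.mul_apply]
      exact Finset.sum_congr rfl fun i _ => Finset.sum_congr rfl fun j _ => by rw [hs i j]
    rw [h2, h1]; simp
  have hspos : 0 < Real.sqrt |(fformII x u).det| := Real.sqrt_pos.2 (abs_pos.2 hpos.ne')
  have key : dot3 (beltrami2 (fformII x) x u) (gaussMap x u) = -2 := by
    unfold beltrami2
    simp only [dot3_eq] at hterm ⊢
    rw [neg_dotProduct, smul_dotProduct, sum_dotProduct]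
    simp only [sum_dotProduct, hterm, ← Finset.mul_sum]
    rw [hsum, smul_eq_mul, inv_mul_cancel_left₀ hspos.ne']
  rw [heig u hu, dot3_eq, smul_dotProduct, smul_eq_mul] at key
  rw [eq_div_iff hlam, dot3_eq, mul_comm]
  exact key
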